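/- arXiv:1104.0043 — 2 statements merged into one kernel-verified Lean document; each statement's English description precedes it below -/
import Mathlib

section
/- Let R be a real number and let c be the capacity function of a complete directed 4-node network satisfying R < I*, i.e., for every node i and every two distinct nodes j, k, both different from i, we have c j i + c k i > R. Then at least three of the six unordered pairs {X,Y} of distinct nodes satisfy c X Y + c Y X > R; that is, the set of unordered pairs of distinct nodes whose two directed link capacities sum to more than R has cardinality at least 3. -/
/-- A set of pairs meeting every triangle and every 4-cycle of `K₄` has at least 3 elements. -/
lemma three_le_card_of_meets (S : Finset (Sym2 (Fin 4)))
    (t0 : s(1,2) ∈ S ∨ s(1,3) ∈ S ∨ s(2,3) ∈ S)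
    (t1 : s(0,2) ∈ S ∨ s(0,3) ∈ S ∨ s(2,3) ∈ S)
    (t2 : s(0,1) ∈ S ∨ s(0,3) ∈ S ∨ s(1,3) ∈ S)
    (t3 : s(0,1) ∈ S ∨ s(0,2) ∈ S ∨ s(1,2) ∈ S)
    (q1 : s(0,1) ∈ S ∨ s(1,2) ∈ S ∨ s(2,3) ∈ S ∨ s(0,3) ∈ S)
    (q2 : s(0,1) ∈ S ∨ s(1,3) ∈ S ∨ s(2,3) ∈ S ∨ s(0,2) ∈ S)
    (q3 : s(0,2) ∈ S ∨ s(1,2) ∈ S ∨ s(1,3) ∈ S ∨ s(0,3) ∈ S) :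
    3 ≤ S.card := by
  have h : ∑ p ∈ ({s(0,1), s(0,2), s(0,3), s(1,2), s(1,3), s(2,3)} : Finset (Sym2 (Fin 4))),
      (if p ∈ S then 1 else 0) ≤ S.card := by
    rw [← Finset.card_filter]
    apply Finset.card_le_card
    intro p hp
    exact (Finset.mem_filter.mp hp).2
  rw [Finset.sum_insert (by decide), Finset.sum_insert (by decide), Finset.sum_insert (by decide),
    Finset.sum_insert (by decide), Finset.sum_insert (by decide), Finset.sum_singleton] at h
  refine le_trans ?_ h
  clear h
  by_cases h1 : s(0,1) ∈ S <;> by_cases h2 : s(0,2) ∈ S <;> by_cases h3 : s(0,3) ∈ S <;>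
    by_cases h4 : s(1,2) ∈ S <;> by_cases h5 : s(1,3) ∈ S <;> by_cases h6 : s(2,3) ∈ S <;>
    simp_all


open Classical in
/-- If `R < I*` in a complete directed 4-node network, then at least three of the six
unordered pairs of distinct nodes have pair sum capacity exceeding `R`. -/
theorem at_least_three_pairs_exceed
    (R : ℝ) (c : Fin 4 → Fin 4 → ℝ)
    (hI : ∀ i j k : Fin 4, j ≠ i → k ≠ i → j ≠ k → c j i + c k i > R) :
    3 ≤ (Finset.univ.filter
      (fun p : Sym2 (Fin 4) =>
        ¬ p.IsDiag ∧
          R < Sym2.lift ⟨fun x y => c x y + c y x, fun x y => by ring⟩ p)).card := by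
  have H : ∀ i j k : Fin 4, (j ≠ i ∧ k ≠ i ∧ j ≠ k) → c j i + c k i > R :=
    fun i j k h => hI i j k h.1 h.2.1 h.2.2
  apply three_le_card_of_meets <;>
    simp only [Finset.mem_filter, Finset.mem_univ, true_and, Sym2.mk_isDiag_iff, Sym2.lift_mk] <;>
    by_contra hc <;> simp at hc
  · linarith [H 1 2 3 (by decide), H 2 1 3 (by decide), H 3 1 2 (by decide)]
  · linarith [H 0 2 3 (by decide), H 2 0 3 (by decide), H 3 0 2 (by decide)]
  · linarith [H 0 1 3 (by decide), H 1 0 3 (by decide), H 3 0 1 (by decide)]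
  · linarith [H 0 1 2 (by decide), H 1 0 2 (by decide), H 2 0 1 (by decide)]
  · linarith [H 0 1 3 (by decide), H 1 0 2 (by decide), H 2 1 3 (by decide), H 3 0 2 (by decide)]
  · linarith [H 0 1 2 (by decide), H 1 0 3 (by decide), H 2 0 3 (by decide), H 3 1 2 (by decide)]
  · linarith [H 0 2 3 (by decide), H 1 2 3 (by decide), H 2 0 1 (by decide), H 3 0 1 (by decide)]
end

section
/- Let R be a real number and let c be the capacity function of a complete directed 4-node network satisfying R < I*, i.e., for every node i and every two distinct nodes j, k, both different from i, we have c j i + c k i > R. Then there exist three pairwise distinct nodes X, Y, Z such that c X Y + c Y X > R and c X Z + c Z X > R. -/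
/-- If `R < I*` in a complete directed 4-node network, then there exist three pairwise
distinct nodes `X, Y, Z` such that both pairs `{X,Y}` and `{X,Z}` have pair sum
capacity exceeding `R`. -/
theorem exists_two_good_pairs_sharing_node
    (R : ℝ) (c : Fin 4 → Fin 4 → ℝ)
    (hI : ∀ i j k : Fin 4, j ≠ i → k ≠ i → j ≠ k → c j i + c k i > R) :
    ∃ X Y Z : Fin 4, X ≠ Y ∧ X ≠ Z ∧ Y ≠ Z ∧
      c X Y + c Y X > R ∧ c X Z + c Z X > R := by
  by_contra hne
  push Not at hne
  -- every 4-cycle `a b d e` contains a good pair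
  have cyc : ∀ a b d e : Fin 4, a ≠ b → a ≠ d → a ≠ e → b ≠ d → b ≠ e → d ≠ e →
      c a b + c b a > R ∨ c b d + c d b > R ∨ c d e + c e d > R ∨ c e a + c a e > R := by
    intro a b d e hab had hae hbd hbe hde
    by_contra h
    push Not at h
    obtain ⟨h1, h2, h3, h4⟩ := h
    have ia := hI a b e hab.symm hae.symm hbe
    have ib := hI b a d hab hbd.symm had
    have id := hI d b e hbd hde.symm hbe
    have ie := hI e a d hae hde had
    linarith
  -- no pair is good: otherwise the complementary 4-cycle has a good pair sharing a node
  have bad : ∀ x y z w : Fin 4, x ≠ y → x ≠ z → x ≠ w → y ≠ z → y ≠ w → z ≠ w →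
      c x y + c y x ≤ R := by
    intro x y z w hxy hxz hxw hyz hyw hzw
    by_contra h
    push Not at h
    have h' : c y x + c x y > R := by linarith
    have n1 := hne x y z hxy hxz hyz h
    have n2 := hne x y w hxy hxw hyw h
    have n3 := hne y x z hxy.symm hyz hxz h'
    have n4 := hne y x w hxy.symm hyw hxw h'
    rcases cyc x z y w hxz hxy hxw hyz.symm hzw hyw with g | g | g | g <;> linarith
  have b1 := bad 0 1 2 3 (by decide) (by decide) (by decide) (by decide) (by decide) (by decide)
  have b2 := bad 1 2 0 3 (by decide) (by decide) (by decide) (by decide) (by decide) (by decide)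
  have b3 := bad 2 3 0 1 (by decide) (by decide) (by decide) (by decide) (by decide) (by decide)
  have b4 := bad 3 0 1 2 (by decide) (by decide) (by decide) (by decide) (by decide) (by decide)
  rcases cyc 0 1 2 3 (by decide) (by decide) (by decide) (by decide) (by decide) (by decide)
    with g | g | g | g <;> linarith
end
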